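/- Let X be a real Banach space and let Y ⊆ X* be a linear subspace having the Orlicz-Thomas property. Let M : Σ → cwk(X) be a set-valued map defined on a σ-algebra Σ, taking values in the family of convex weakly compact non-empty subsets of X, such that the support map s(x*,M) is countably additive for every x* ∈ Y. Then M is a strong multimeasure. -/

import Mathlib

/-!
Everything is read off from scalar series through one separation fact: a linear functional on `Y`
dominated by the support function of a convex `σ(X, Y)`-compact set `K` is evaluation at a point of
`K`.

Let `Aₙ` be disjoint and `xₙ ∈ M(Aₙ)`. For `S ⊆ ℕ` the functional `f ↦ ∑_{n ∈ S} f(xₙ)` on `Y` is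
dominated by `∑_{n ∈ S} s(f, M(Aₙ)) = s(f, M(⋃_{n ∈ S} Aₙ))`, so it is evaluation at some
`ν(S) ∈ M(⋃_{n ∈ S} Aₙ)`. Each `f ∘ ν` is countably additive on the power set of `ℕ`, hence so is
`ν` by the Orlicz–Thomas property. Since `Y` separates points, `ν({n}) = xₙ`; thus `∑ xₙ` converges
unconditionally, to `ν(ℕ) ∈ M(⋃ Aₙ)`.

Conversely, `∑ M(Aₙ)` is convex and `σ(X, Y)`-compact, the latter because summation is continuous on
the product of the `M(Aₙ)` by the Weierstrass test, and its support function on `Y` is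
`∑ s(f, M(Aₙ)) = s(f, M(⋃ Aₙ))`. Separation then shows that it contains `M(⋃ Aₙ)`, so the two sets
are equal even before taking closures.
-/

/-- The series of sets `∑ₙ Cₙ` is unconditionally convergent: every selection is
(unconditionally) summable. -/
def UncondConvSeriesOfSets {X : Type*} [NormedAddCommGroup X] (C : ℕ → Set X) : Prop :=
  ∀ x : ℕ → X, (∀ n, x n ∈ C n) → Summable x

/-- The sum of the series of sets `∑ₙ Cₙ`: the set of all sums of selections. -/
def seriesSumSet {X : Type*} [NormedAddCommGroup X] (C : ℕ → Set X) : Set X :=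
  {s | ∃ x : ℕ → X, (∀ n, x n ∈ C n) ∧ HasSum x s}

/-- The weak topology on `X`: the topology of pointwise convergence on `X*`. -/
def weakTop (X : Type*) [NormedAddCommGroup X] [NormedSpace ℝ X] : TopologicalSpace X :=
  TopologicalSpace.induced (fun x => fun f : X →L[ℝ] ℝ => f x) Pi.topologicalSpace

/-- The support functional `s(x*, C) = sup x*(C)`. -/
noncomputable def supportFn {X : Type*} [NormedAddCommGroup X] [NormedSpace ℝ X]
    (f : X →L[ℝ] ℝ) (C : Set X) : ℝ := sSup (f '' C)

/-- A set function on a σ-algebra, with values in a topological abelian monoid, is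
countably additive. -/
def CountablyAdditive {Ω E : Type*} [MeasurableSpace Ω] [AddCommMonoid E]
    [TopologicalSpace E] (ν : Set Ω → E) : Prop :=
  ∀ A : ℕ → Set Ω, (∀ n, MeasurableSet (A n)) → Pairwise (Function.onFun Disjoint A) →
    HasSum (fun n => ν (A n)) (ν (⋃ n, A n))

/-- A set `W ⊆ X*` has the Orlicz–Thomas property. -/
def HasOrliczThomas {X : Type*} [NormedAddCommGroup X] [NormedSpace ℝ X]
    (W : Set (X →L[ℝ] ℝ)) : Prop :=
  ∀ (Ω : Type) (_ : MeasurableSpace Ω) (ν : Set Ω → X),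
    (∀ f ∈ W, CountablyAdditive (fun A => f (ν A))) → CountablyAdditive ν

/-- `M` is a strong multimeasure. -/
def IsStrongMultimeasure {Ω X : Type*} [MeasurableSpace Ω] [NormedAddCommGroup X]
    (M : Set Ω → Set X) : Prop :=
  ∀ A : ℕ → Set Ω, (∀ n, MeasurableSet (A n)) → Pairwise (Function.onFun Disjoint A) →
    UncondConvSeriesOfSets (fun n => M (A n)) ∧
    closure (M (⋃ n, A n)) = closure (seriesSumSet fun n => M (A n))

open Set Function

section Separation

variable {E F : Type*} [AddCommGroup E] [Module ℝ E] [AddCommGroup F] [Module ℝ F]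

theorem mem_of_isCompact_image_pairing {B : E →ₗ[ℝ] F →ₗ[ℝ] ℝ} (hB : Injective B) {K : Set E}
    (hconv : Convex ℝ K) (hK : IsCompact ((fun x f => B x f) '' K)) {x : E}
    (hx : ∀ f, ∃ k ∈ K, B x f ≤ B k f) : x ∈ K := by
  have hemb := WeakBilin.isEmbedding hB
  have : T2Space (WeakBilin B) := hemb.t2Space
  have hclosed : IsClosed (X := WeakBilin B) K := (hemb.isCompact_iff.2 hK).isClosed
  by_contra hxK
  obtain ⟨L, c, hLK, hLx⟩ :=
    geometric_hahn_banach_closed_point (E := WeakBilin B) hconv hclosed hxK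
  obtain ⟨f, rfl⟩ := LinearMap.dualEmbedding_surjective B L
  obtain ⟨k, hk, hxk⟩ := hx f
  exact ((hLK k hk).trans hLx).not_ge hxk

theorem exists_mem_eq_of_isCompact_image_pairing {B : E →ₗ[ℝ] F →ₗ[ℝ] ℝ} {K : Set E}
    (hconv : Convex ℝ K) (hK : IsCompact ((fun x f => B x f) '' K)) {φ : Module.Dual ℝ F}
    (hφ : ∀ f, ∃ k ∈ K, φ f ≤ B k f) : ∃ k ∈ K, B k = φ := by
  -- Separate `φ` from the image of `K` in the algebraic dual of `F`, paired with `F` by evaluation.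
  let evaluation : Module.Dual ℝ F →ₗ[ℝ] F →ₗ[ℝ] ℝ := LinearMap.id
  refine mem_of_isCompact_image_pairing (B := evaluation) injective_id (hconv.linear_image B)
    ?_ fun f => ?_
  · rwa [image_image]
  · obtain ⟨k, hk, hle⟩ := hφ f
    exact ⟨B k, mem_image_of_mem B hk, hle⟩

end Separation

section WeakCompactness

variable {X : Type*} [NormedAddCommGroup X] [NormedSpace ℝ X]

/-- The duality pairing `(x, f) ↦ f x` of `X` with a subspace `Y` of its dual. It is injective
exactly when `Y` separates the points of `X`. -/
def dualSubspacePairing (Y : Submodule ℝ (X →L[ℝ] ℝ)) : X →ₗ[ℝ] Y →ₗ[ℝ] ℝ :=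
  ((topDualPairing ℝ X).domRestrict Y).flip

/-- Compactness for the topology `σ(X, Y)` of pointwise convergence on `Y ⊆ X*`, which need not be
Hausdorff. -/
def IsWeaklyCompactFor (Y : Submodule ℝ (X →L[ℝ] ℝ)) (K : Set X) : Prop :=
  @IsCompact X (.induced (fun x (f : Y) => f.1 x) Pi.topologicalSpace) K

variable {Y : Submodule ℝ (X →L[ℝ] ℝ)} {K : Set X}

theorem isWeaklyCompactFor_iff_isCompact_image :
    IsWeaklyCompactFor Y K ↔ IsCompact ((fun x (f : Y) => f.1 x) '' K) :=
  @Topology.IsInducing.isCompact_iff _ _ (.induced _ _) _ _ _ (.induced _)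

theorem isWeaklyCompactFor_of_isCompact_weakTop (Y : Submodule ℝ (X →L[ℝ] ℝ))
    (hK : @IsCompact X (weakTop X) K) : IsWeaklyCompactFor Y K := by
  have himage : IsCompact ((fun x (f : X →L[ℝ] ℝ) => f x) '' K) :=
    (@Topology.IsInducing.isCompact_iff _ _ (weakTop X) _ _ _ (.induced _)).1 hK
  have hrestrict : Continuous fun (φ : (X →L[ℝ] ℝ) → ℝ) (f : Y) => φ f := by fun_prop
  rw [isWeaklyCompactFor_iff_isCompact_image]
  simpa only [image_image] using himage.image hrestrict

namespace IsWeaklyCompactFor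

theorem isCompact_image (hK : IsWeaklyCompactFor Y K) {f : X →L[ℝ] ℝ} (hf : f ∈ Y) :
    IsCompact (f '' K) := by
  have himage := isWeaklyCompactFor_iff_isCompact_image.1 hK
  simpa only [image_image] using himage.image (continuous_apply (⟨f, hf⟩ : Y))

theorem le_supportFn (hK : IsWeaklyCompactFor Y K) {f : X →L[ℝ] ℝ} (hf : f ∈ Y) {x : X}
    (hx : x ∈ K) : f x ≤ supportFn f K :=
  le_csSup (hK.isCompact_image hf).bddAbove (mem_image_of_mem f hx)

theorem exists_mem_eq_supportFn (hK : IsWeaklyCompactFor Y K) (hne : K.Nonempty)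
    {f : X →L[ℝ] ℝ} (hf : f ∈ Y) : ∃ x ∈ K, f x = supportFn f K :=
  (hK.isCompact_image hf).sSup_mem (hne.image f)

theorem abs_apply_le (hK : IsWeaklyCompactFor Y K) {f : X →L[ℝ] ℝ} (hf : f ∈ Y) {x : X}
    (hx : x ∈ K) : |f x| ≤ |supportFn f K| + |supportFn (-f) K| := by
  have hneg : -f x ≤ supportFn (-f) K := hK.le_supportFn (Y.neg_mem hf) hx
  calc |f x| = max (f x) (-f x) := rfl
    _ ≤ max |supportFn f K| |supportFn (-f) K| :=
      max_le_max ((hK.le_supportFn hf hx).trans (le_abs_self _)) (hneg.trans (le_abs_self _))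
    _ ≤ |supportFn f K| + |supportFn (-f) K| :=
      max_le_add_of_nonneg (abs_nonneg _) (abs_nonneg _)

end IsWeaklyCompactFor

end WeakCompactness

section SupportSums

variable {X : Type*} [NormedAddCommGroup X] [NormedSpace ℝ X] {Y : Submodule ℝ (X →L[ℝ] ℝ)}

/-- `K` is the sum of the family `C` as far as support functions on `Y` can tell. It isolates
what countable additivity of `s(x*, M)` says about one disjoint family. -/
def HasSupportSum {ι : Type*} (Y : Submodule ℝ (X →L[ℝ] ℝ)) (C : ι → Set X) (K : Set X) : Prop :=
  ∀ f ∈ Y, HasSum (fun i => supportFn f (C i)) (supportFn f K)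

namespace HasSupportSum

variable {ι : Type*} {C : ι → Set X} {K : Set X}

theorem summable_abs_add_abs (hCK : HasSupportSum Y C K) {f : X →L[ℝ] ℝ} (hf : f ∈ Y) :
    Summable fun i => |supportFn f (C i)| + |supportFn (-f) (C i)| :=
  (hCK f hf).summable.abs.add (hCK (-f) (Y.neg_mem hf)).summable.abs

theorem summable_apply (hCK : HasSupportSum Y C K) (hC : ∀ i, IsWeaklyCompactFor Y (C i))
    {x : ι → X} (hx : ∀ i, x i ∈ C i) {f : X →L[ℝ] ℝ} (hf : f ∈ Y) :
    Summable fun i => f (x i) :=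
  .of_norm_bounded (hCK.summable_abs_add_abs hf) fun i => (hC i).abs_apply_le hf (hx i)

theorem exists_mem_forall_hasSum_apply (hCK : HasSupportSum Y C K)
    (hC : ∀ i, IsWeaklyCompactFor Y (C i)) (hne : K.Nonempty) (hconv : Convex ℝ K)
    (hK : IsWeaklyCompactFor Y K) {x : ι → X} (hx : ∀ i, x i ∈ C i) :
    ∃ u ∈ K, ∀ f ∈ Y, HasSum (fun i => f (x i)) (f u) := by
  have hsum (f : Y) : Summable fun i => f.1 (x i) := hCK.summable_apply hC hx f.2
  let φ : Module.Dual ℝ Y :=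
    { toFun f := ∑' i, f.1 (x i)
      map_add' f g := (hsum f).tsum_add (hsum g)
      map_smul' _ _ := tsum_mul_left }
  have hφ (f : Y) : ∃ k ∈ K, φ f ≤ f.1 k := by
    obtain ⟨k, hk, hfk⟩ := hK.exists_mem_eq_supportFn hne f.2
    refine ⟨k, hk, hfk ▸ hasSum_le (fun i => ?_) (hsum f).hasSum (hCK f f.2)⟩
    exact (hC i).le_supportFn f.2 (hx i)
  obtain ⟨u, hu, huφ⟩ := exists_mem_eq_of_isCompact_image_pairing (F := Y)
    (B := dualSubspacePairing Y) hconv (isWeaklyCompactFor_iff_isCompact_image.1 hK) hφ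
  refine ⟨u, hu, fun f hf => ?_⟩
  have hfu : f u = ∑' i, f (x i) := LinearMap.congr_fun huφ ⟨f, hf⟩
  exact hfu ▸ (hsum ⟨f, hf⟩).hasSum

end HasSupportSum

end SupportSums

section SeriesOfSets

variable {X : Type*} [NormedAddCommGroup X] {C : ℕ → Set X}

theorem seriesSumSet_eq_image_tsum (hC : UncondConvSeriesOfSets C) :
    seriesSumSet C = (fun x : ℕ → X => ∑' n, x n) '' univ.pi C := by
  ext s
  constructor
  · rintro ⟨x, hx, hs⟩
    exact ⟨x, fun n _ => hx n, hs.tsum_eq⟩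
  · rintro ⟨x, hx, rfl⟩
    have hx' (n : ℕ) : x n ∈ C n := hx n (mem_univ n)
    exact ⟨x, hx', (hC x hx').hasSum⟩

variable [NormedSpace ℝ X] {Y : Submodule ℝ (X →L[ℝ] ℝ)} {K : Set X}

theorem convex_seriesSumSet (hconv : ∀ n, Convex ℝ (C n)) : Convex ℝ (seriesSumSet C) := by
  rintro s ⟨x, hx, hs⟩ t ⟨y, hy, ht⟩ a b ha hb hab
  exact ⟨fun n => a • x n + b • y n, fun n => hconv n (hx n) (hy n) ha hb hab,
    (hs.const_smul a).add (ht.const_smul b)⟩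

namespace HasSupportSum

theorem isWeaklyCompactFor_seriesSumSet (hCK : HasSupportSum Y C K)
    (hunc : UncondConvSeriesOfSets C) (hC : ∀ n, IsWeaklyCompactFor Y (C n)) :
    IsWeaklyCompactFor Y (seriesSumSet C) := by
  let evaluation (x : X) (f : Y) : ℝ := f.1 x
  have hprod : IsCompact (univ.pi fun n => evaluation '' C n) :=
    isCompact_univ_pi fun n => isWeaklyCompactFor_iff_isCompact_image.1 (hC n)
  have hcont : ContinuousOn (fun (g : ℕ → Y → ℝ) f => ∑' n, g n f)
      (univ.pi fun n => evaluation '' C n) := by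
    refine continuousOn_pi.2 fun f => continuousOn_tsum (fun n => by fun_prop)
      (hCK.summable_abs_add_abs f.2) fun n g hg => ?_
    obtain ⟨x, hx, hxg⟩ := hg n (mem_univ n)
    exact hxg ▸ (hC n).abs_apply_le f.2 hx
  have himage := hprod.image_of_continuousOn hcont
  rw [← piMap_image_univ_pi, image_image] at himage
  rw [isWeaklyCompactFor_iff_isCompact_image, seriesSumSet_eq_image_tsum hunc, image_image]
  have htsum (x : ℕ → X) (hx : x ∈ univ.pi C) :
      evaluation (∑' n, x n) = fun f => ∑' n, evaluation (x n) f :=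
    funext fun f => f.1.map_tsum (hunc x fun n => hx n (mem_univ n))
  rwa [image_congr htsum]

theorem exists_mem_seriesSumSet_eq_supportFn (hCK : HasSupportSum Y C K)
    (hunc : UncondConvSeriesOfSets C) (hC : ∀ n, IsWeaklyCompactFor Y (C n))
    (hne : ∀ n, (C n).Nonempty) {f : X →L[ℝ] ℝ} (hf : f ∈ Y) :
    ∃ s ∈ seriesSumSet C, f s = supportFn f K := by
  choose x hx hfx using fun n => (hC n).exists_mem_eq_supportFn (hne n) hf
  have hs : HasSum x (∑' n, x n) := (hunc x hx).hasSum
  have hfs : HasSum (fun n => supportFn f (C n)) (f (∑' n, x n)) := by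
    simpa only [hfx] using f.hasSum hs
  exact ⟨_, ⟨x, hx, hs⟩, hfs.unique (hCK f hf)⟩

theorem subset_seriesSumSet (hCK : HasSupportSum Y C K)
    (hY : Injective (dualSubspacePairing Y)) (hunc : UncondConvSeriesOfSets C)
    (hC : ∀ n, IsWeaklyCompactFor Y (C n)) (hne : ∀ n, (C n).Nonempty)
    (hconv : ∀ n, Convex ℝ (C n)) (hK : IsWeaklyCompactFor Y K) : K ⊆ seriesSumSet C := by
  intro u hu
  have hcpt := isWeaklyCompactFor_iff_isCompact_image.1
    (hCK.isWeaklyCompactFor_seriesSumSet hunc hC)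
  refine mem_of_isCompact_image_pairing (F := Y) hY (convex_seriesSumSet hconv) hcpt fun f => ?_
  obtain ⟨s, hs, hfs⟩ := hCK.exists_mem_seriesSumSet_eq_supportFn hunc hC hne f.2
  exact ⟨s, hs, (hK.le_supportFn f.2 hu).trans_eq hfs.symm⟩

theorem seriesSumSet_subset (hCK : HasSupportSum Y C K)
    (hY : Injective (dualSubspacePairing Y)) (hC : ∀ n, IsWeaklyCompactFor Y (C n))
    (hne : K.Nonempty) (hconv : Convex ℝ K) (hK : IsWeaklyCompactFor Y K) :
    seriesSumSet C ⊆ K := by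
  rintro s ⟨x, hx, hs⟩
  obtain ⟨u, hu, hxu⟩ := hCK.exists_mem_forall_hasSum_apply hC hne hconv hK hx
  have hsu : s = u :=
    hY (LinearMap.ext fun f => (f.1.hasSum hs).unique (hxu f.1 f.2))
  exact hsu ▸ hu

end HasSupportSum

end SeriesOfSets

section CountableAdditivity

variable {Ω E : Type*} [MeasurableSpace Ω] [AddCommGroup E] [TopologicalSpace E]
  [IsTopologicalAddGroup E] [T2Space E]

namespace CountablyAdditive

variable {ν : Set Ω → E}

theorem apply_empty (hν : CountablyAdditive ν) : ν ∅ = 0 :=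
  (summable_const_iff _).1
    (hν (fun _ => ∅) (fun _ => .empty) fun _ _ _ => disjoint_empty ∅).summable

theorem hasSum_subtype (hν : CountablyAdditive ν) {A : ℕ → Set Ω}
    (hA : ∀ n, MeasurableSet (A n)) (hdisj : Pairwise (Disjoint on A)) (S : Set ℕ) :
    HasSum (fun n : S => ν (A n)) (ν (⋃ n ∈ S, A n)) := by
  have hsub (n : ℕ) : ⋃ _ : n ∈ S, A n ⊆ A n := iUnion_subset fun _ => subset_rfl
  -- Replacing `A n` by `∅` for `n ∉ S` turns a sum over `S` into a sum over `ℕ`.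
  have hsum := hν (fun n => ⋃ _ : n ∈ S, A n) (fun n => .iUnion fun _ => hA n)
    fun i j hij => (hdisj hij).mono (hsub i) (hsub j)
  refine (hasSum_subtype_iff_indicator (f := fun n => ν (A n))).2 ?_
  convert hsum using 2 with n
  by_cases hn : n ∈ S <;> simp [hn, hν.apply_empty]

end CountablyAdditive

end CountableAdditivity

section OrliczThomas

variable {X : Type*} [NormedAddCommGroup X] [NormedSpace ℝ X]

namespace HasOrliczThomas

theorem eq_zero_of_forall_apply_eq_zero {W : Set (X →L[ℝ] ℝ)} (hW : HasOrliczThomas W) {x : X}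
    (hx : ∀ f ∈ W, f x = 0) : x = 0 := by
  -- A constant set function is countably additive only if its value is `0`.
  have hconst : CountablyAdditive fun _ : Set Unit => x :=
    hW Unit _ _ fun f hf A _ _ => by simp only [hx f hf, hasSum_zero]
  exact hconst.apply_empty

theorem eq_of_forall_apply_eq {W : Set (X →L[ℝ] ℝ)} (hW : HasOrliczThomas W) {x y : X}
    (hxy : ∀ f ∈ W, f x = f y) : x = y :=
  sub_eq_zero.1 <| hW.eq_zero_of_forall_apply_eq_zero fun f hf => by
    rw [map_sub, hxy f hf, sub_self]

theorem injective_dualSubspacePairing {Y : Submodule ℝ (X →L[ℝ] ℝ)}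
    (hY : HasOrliczThomas (Y : Set (X →L[ℝ] ℝ))) : Injective (dualSubspacePairing Y) :=
  fun _ _ hxy => hY.eq_of_forall_apply_eq fun f hf => LinearMap.congr_fun hxy ⟨f, hf⟩

-- The analogue for `W` of the Orlicz–Pettis theorem on subseries convergence.
theorem summable_of_forall_subseries {W : Set (X →L[ℝ] ℝ)} (hW : HasOrliczThomas W) {x : ℕ → X}
    (hx : ∀ S : Set ℕ, ∃ u, ∀ f ∈ W, HasSum (fun n : S => f (x n)) (f u)) : Summable x := by
  choose ν hν using hx
  have hνca : @CountablyAdditive ℕ X ⊤ _ _ ν := by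
    refine hW ℕ ⊤ ν fun f hf B _ hB => ?_
    have hsigma := (unionEqSigmaOfDisjoint hB).symm.hasSum_iff.2 (hν (⋃ k, B k) f hf)
    refine hsigma.sigma fun k => ?_
    simpa only [comp_def, coe_unionEqSigmaOfDisjoint_symm_apply] using hν (B k) f hf
  have hνx (n : ℕ) : ν {n} = x n := hW.eq_of_forall_apply_eq fun f hf =>
    (hν {n} f hf).unique (hasSum_unique fun m : ({n} : Set ℕ) => f (x m))
  have hsum := hνca (fun n => {n}) (fun _ => trivial) fun _ _ hij => disjoint_singleton.2 hij
  simpa only [hνx] using hsum.summable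

end HasOrliczThomas

end OrliczThomas

theorem statement8_general {Ω X : Type*} [MeasurableSpace Ω]
    [NormedAddCommGroup X] [NormedSpace ℝ X]
    (Y : Submodule ℝ (X →L[ℝ] ℝ))
    (hOT : HasOrliczThomas (Y : Set (X →L[ℝ] ℝ)))
    (M : Set Ω → Set X)
    (hne : ∀ A : Set Ω, MeasurableSet A → (M A).Nonempty)
    (hconv : ∀ A : Set Ω, MeasurableSet A → Convex ℝ (M A))
    (hcpt : ∀ A : Set Ω, MeasurableSet A → IsWeaklyCompactFor Y (M A))
    (hca : ∀ f ∈ Y, CountablyAdditive (fun A => supportFn f (M A)))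
    (A : ℕ → Set Ω) (hA : ∀ n, MeasurableSet (A n)) (hdisj : Pairwise (Disjoint on A)) :
    UncondConvSeriesOfSets (fun n => M (A n)) ∧
      M (⋃ n, A n) = seriesSumSet fun n => M (A n) := by
  have hY : Injective (dualSubspacePairing Y) := hOT.injective_dualSubspacePairing
  have hC (n : ℕ) : IsWeaklyCompactFor Y (M (A n)) := hcpt _ (hA n)
  have hU : MeasurableSet (⋃ n, A n) := .iUnion hA
  have hunc : UncondConvSeriesOfSets fun n => M (A n) := by
    refine fun x hx => hOT.summable_of_forall_subseries fun S => ?_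
    have hS : MeasurableSet (⋃ n ∈ S, A n) := .biUnion S.to_countable fun n _ => hA n
    have hsub : HasSupportSum Y (fun n : S => M (A n)) (M (⋃ n ∈ S, A n)) :=
      fun f hf => (hca f hf).hasSum_subtype hA hdisj S
    obtain ⟨u, -, hu⟩ := hsub.exists_mem_forall_hasSum_apply (fun n => hC n) (hne _ hS)
      (hconv _ hS) (hcpt _ hS) fun n => hx n
    exact ⟨u, hu⟩
  have hsum : HasSupportSum Y (fun n => M (A n)) (M (⋃ n, A n)) := fun f hf => hca f hf A hA hdisj
  exact ⟨hunc, Subset.antisymm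
    (hsum.subset_seriesSumSet hY hunc hC (fun n => hne _ (hA n)) (fun n => hconv _ (hA n))
      (hcpt _ hU))
    (hsum.seriesSumSet_subset hY hC (hne _ hU) (hconv _ hU) (hcpt _ hU))⟩

/-- Let `X` be a Banach space and `Y ⊆ X*` a linear subspace with the
Orlicz–Thomas property. If `M : Σ → cwk(X)` takes convex, weakly compact, non-empty
values and `s(x*, M)` is countably additive for every `x* ∈ Y`, then `M` is a strong
multimeasure. -/
theorem statement8 {Ω X : Type*} [MeasurableSpace Ω]
    [NormedAddCommGroup X] [NormedSpace ℝ X] [CompleteSpace X]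
    (Y : Submodule ℝ (X →L[ℝ] ℝ))
    (hOT : HasOrliczThomas (Y : Set (X →L[ℝ] ℝ)))
    (M : Set Ω → Set X)
    (hne : ∀ A : Set Ω, MeasurableSet A → (M A).Nonempty)
    (hconv : ∀ A : Set Ω, MeasurableSet A → Convex ℝ (M A))
    (hcpt : ∀ A : Set Ω, MeasurableSet A → @IsCompact X (weakTop X) (M A))
    (hca : ∀ f ∈ Y, CountablyAdditive (fun A => supportFn f (M A))) :
    IsStrongMultimeasure M := by
  intro A hA hdisj
  obtain ⟨hunc, hsum⟩ := statement8_general Y hOT M hne hconv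
    (fun B hB => isWeaklyCompactFor_of_isCompact_weakTop Y (hcpt B hB)) hca A hA hdisj
  exact ⟨hunc, congrArg closure hsum⟩
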